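/- Let G = (V, E, w_G) be a weighted directed graph with non-negative integer edge weights, let s ∈ V, let h ≥ 1 be an integer, and let C ⊆ V with s ∈ C. Let d̃ : C × C → ℕ∞ satisfy d̃(x, y) ≤ 2·dist_G^h(x, y) for every x, y ∈ C, and let H = (C, C × C, w_H) be the skeleton graph with w_H(x, y) = d̃(x, y). Let π be a minimum-weight path in G from a node x ∈ C to a node v ∈ V, and let y_1 = x, y_2, …, y_k be nodes of C lying on π in this order such that, for each 1 ≤ i < k, the subpath of π from y_i to y_{i+1} has at most h − 1 edges. Then dist_H(s, y_k) ≤ w_H(s, y_1) + 2·dist_G(y_1, y_k). -/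

import Mathlib

/-!
Each hop `y_i → y_{i+1}` of the skeleton graph costs at most twice the weight of the corresponding
segment of the path `p`, because that segment is itself a walk with at most `h` edges. Together with
the initial edge `s → y_0` and the triangle inequality `gdist_triangle`, this bounds `dist_H(s, y_k)`
by `w_H(s, y_0)` plus twice the weight of the segment of `p` from `y_0` to `y_k`.

That segment is a shortest walk: bypassing it by a shortest walk and using the triangle inequality
twice compares the weight of `p` with itself, and the two outer segments, being of finite weight,
cancel. Segments are handled through the node function `f : ℕ → V` of `p`, whose segment weights are
finite sums (`segWeight`) that add up under concatenation; `isWalk_seg` relates them to walks.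
-/


open scoped ENat ENNReal

section SSSP

variable {V : Type*}

/-- A walk (path) from `u` to `v` in the directed graph with edge set `E`:
a nonempty list of nodes starting at `u`, ending at `v`, with consecutive pairs in `E`. -/
def IsWalk (E : Set (V × V)) (u v : V) (p : List V) : Prop :=
  p ≠ [] ∧ p.head? = some u ∧ p.getLast? = some v ∧ p.Chain' (fun a b => (a, b) ∈ E)

/-- The weight of a walk: the sum of the weights of its edges. -/
def walkWeight (w : V × V → ℕ∞) (p : List V) : ℕ∞ :=
  ((p.zip p.tail).map w).sum

/-- The distance from `u` to `v`: the minimum weight of a walk from `u` to `v`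
(`⊤` if none exists; it is `0` for `u = v` via the single-node walk). -/
noncomputable def gdist (E : Set (V × V)) (w : V × V → ℕ∞) (u v : V) : ℕ∞ :=
  sInf {c | ∃ p, IsWalk E u v p ∧ walkWeight w p = c}

/-- The `h`-hop distance: the minimum weight of a walk from `u` to `v`
with at most `h` edges (i.e. at most `h + 1` nodes); `⊤` if none exists. -/
noncomputable def hdist (E : Set (V × V)) (w : V × V → ℕ∞) (h : ℕ) (u v : V) : ℕ∞ :=
  sInf {c | ∃ p, IsWalk E u v p ∧ p.length ≤ h + 1 ∧ walkWeight w p = c}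

/-- `C ⊆ V` is a skeleton set for `(G, s, h)`: it contains `s`, and for every pair
`u, v` such that some shortest path from `u` to `v` consists of exactly `⌈h/2⌉` nodes,
there is a shortest path from `u` to `v` with exactly `⌈h/2⌉` nodes containing a node of `C`. -/
def IsSkeleton (E : Set (V × V)) (w : V × V → ℕ∞) (s : V) (h : ℕ) (C : Set V) : Prop :=
  s ∈ C ∧ ∀ u v : V,
    (∃ p, IsWalk E u v p ∧ walkWeight w p = gdist E w u v ∧ p.length = (h + 1) / 2) →
    ∃ p, IsWalk E u v p ∧ walkWeight w p = gdist E w u v ∧ p.length = (h + 1) / 2 ∧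
      ∃ x ∈ C, x ∈ p

end SSSP

section Helpers

variable {V : Type*}

lemma isWalk_cons_cons {E : Set (V × V)} {u v a b : V} {l : List V} :
    IsWalk E u v (a :: b :: l) ↔ a = u ∧ (a, b) ∈ E ∧ IsWalk E b v (b :: l) := by
  simp only [IsWalk, List.Chain', List.isChain_cons_cons, List.head?_cons, Option.some.injEq,
    List.getLast?_cons_cons, ne_eq, reduceCtorEq, not_false_eq_true, true_and]
  tauto

lemma isWalk_singleton {E : Set (V × V)} {u v a : V} :
    IsWalk E u v [a] ↔ a = u ∧ a = v := by
  simp [IsWalk, List.Chain']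

lemma walkWeight_cons_cons (w : V × V → ℕ∞) (a b : V) (l : List V) :
    walkWeight w (a :: b :: l) = w (a, b) + walkWeight w (b :: l) := by
  simp [walkWeight]

lemma walkWeight_singleton (w : V × V → ℕ∞) (a : V) : walkWeight w [a] = 0 := by
  simp [walkWeight]

lemma gdist_le {E : Set (V × V)} {w : V × V → ℕ∞} {u v : V} {p : List V}
    (hp : IsWalk E u v p) : gdist E w u v ≤ walkWeight w p :=
  sInf_le ⟨p, hp, rfl⟩

lemma gdist_le_edge {E : Set (V × V)} {w : V × V → ℕ∞} {u v : V} (huv : (u, v) ∈ E) :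
    gdist E w u v ≤ w (u, v) := by
  have hw : IsWalk E u v [u, v] := by
    simp [isWalk_cons_cons, isWalk_singleton, huv]
  simpa [walkWeight_cons_cons, walkWeight_singleton] using gdist_le (w := w) hw

lemma hdist_le {E : Set (V × V)} {w : V × V → ℕ∞} {h : ℕ} {u v : V} {p : List V}
    (hp : IsWalk E u v p) (hl : p.length ≤ h + 1) : hdist E w h u v ≤ walkWeight w p :=
  sInf_le ⟨p, hp, hl, rfl⟩

/-- The infimum defining `gdist` is attained unless it is over the empty set. -/
lemma gdist_eq_top_or_attained (E : Set (V × V)) (w : V × V → ℕ∞) (u v : V) :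
    gdist E w u v = ⊤ ∨ ∃ p, IsWalk E u v p ∧ walkWeight w p = gdist E w u v := by
  rcases Set.eq_empty_or_nonempty {c | ∃ p, IsWalk E u v p ∧ walkWeight w p = c} with h0 | h0
  · left
    rw [gdist, h0, sInf_empty]
  · exact Or.inr (csInf_mem h0)

lemma exists_isWalk_concat (E : Set (V × V)) (w : V × V → ℕ∞) {u v z : V} {p q : List V}
    (hp : IsWalk E u v p) (hq : IsWalk E v z q) :
    ∃ r, IsWalk E u z r ∧ walkWeight w r = walkWeight w p + walkWeight w q := by
  induction p generalizing u with
  | nil => exact absurd rfl hp.1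
  | cons a l ih =>
    cases l with
    | nil =>
      obtain ⟨rfl, rfl⟩ := isWalk_singleton.1 hp
      exact ⟨q, hq, by simp [walkWeight_singleton]⟩
    | cons b l =>
      obtain ⟨rfl, hab, hbl⟩ := isWalk_cons_cons.1 hp
      obtain ⟨r, hr, hrw⟩ := ih hbl
      cases r with
      | nil => exact absurd rfl hr.1
      | cons c r =>
        obtain rfl : c = b := by simpa using hr.2.1
        exact ⟨a :: c :: r, isWalk_cons_cons.2 ⟨rfl, hab, hr⟩, by
          rw [walkWeight_cons_cons, walkWeight_cons_cons, hrw, add_assoc]⟩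

lemma gdist_triangle (E : Set (V × V)) (w : V × V → ℕ∞) (u v z : V) :
    gdist E w u z ≤ gdist E w u v + gdist E w v z := by
  rcases gdist_eq_top_or_attained E w u v with h1 | ⟨p, hp, hpw⟩
  · simp [h1]
  rcases gdist_eq_top_or_attained E w v z with h2 | ⟨q, hq, hqw⟩
  · simp [h2]
  obtain ⟨r, hr, hrw⟩ := exists_isWalk_concat E w hp hq
  rw [← hpw, ← hqw, ← hrw]
  exact gdist_le hr

/-- The weight of the segment of the node sequence `f` starting at index `i` with `n` edges. -/
def segWeight (w : V × V → ℕ) (f : ℕ → V) (i n : ℕ) : ℕ :=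
  ∑ t ∈ Finset.range n, w (f (i + t), f (i + t + 1))

lemma segWeight_add (w : V × V → ℕ) (f : ℕ → V) (i m n : ℕ) :
    segWeight w f i (m + n) = segWeight w f i m + segWeight w f (i + m) n := by
  simp [segWeight, Finset.sum_range_add, add_assoc]

/-- Consecutive edges of the node sequence `f` form a walk whose weight is `segWeight`. -/
lemma isWalk_seg (E : Set (V × V)) (w : V × V → ℕ) (f : ℕ → V) (i n : ℕ)
    (hE : ∀ t, i ≤ t → t < i + n → (f t, f (t + 1)) ∈ E) :
    IsWalk E (f i) (f (i + n)) ((List.range' i (n + 1)).map f) ∧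
      walkWeight (fun e => (w e : ℕ∞)) ((List.range' i (n + 1)).map f) =
        (segWeight w f i n : ℕ∞) := by
  induction n generalizing i with
  | zero => simp [isWalk_singleton, walkWeight_singleton, segWeight]
  | succ n ih =>
    obtain ⟨h1, h2⟩ := ih (i + 1) fun t ht ht' => hE t (by omega) (by omega)
    simp only [List.range'_succ, List.map_cons] at h1 h2 ⊢
    rw [isWalk_cons_cons, walkWeight_cons_cons, h2, add_comm n 1, segWeight_add]
    refine ⟨⟨rfl, hE i le_rfl (by omega), by rwa [← add_assoc]⟩, ?_⟩
    simp [segWeight]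

end Helpers

/-- Let `C ⊆ V` with `s ∈ C`, `d̃ : C × C → ℕ∞` with
`d̃(x,y) ≤ 2·dist_G^h(x,y)`, and `H = (C, C×C, w_H)` the skeleton graph with `w_H = d̃`.
Let `π` be a minimum-weight path in `G` from `x ∈ C` to `v`, and let
`y_0 = x, y_1, …, y_k` be nodes of `C` lying on `π` in this order such that each
consecutive subpath of `π` from `y_i` to `y_{i+1}` has at most `h − 1` edges. Then
`dist_H(s, y_k) ≤ w_H(s, y_0) + 2·dist_G(y_0, y_k)`. -/
theorem skeleton_graph_distance_along_shortest_path
    {V : Type*} [Fintype V]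
    (E : Set (V × V)) (wG : V × V → ℕ) (s : V) (h : ℕ) (hh : 1 ≤ h)
    (C : Set V) (hsC : s ∈ C)
    (dtil : V → V → ℕ∞)
    (hdtil : ∀ x ∈ C, ∀ y ∈ C, dtil x y ≤ 2 * hdist E (fun e => (wG e : ℕ∞)) h x y)
    -- the skeleton graph `H = (C, C × C, w_H)`
    (EH : Set (V × V)) (hEH : EH = C ×ˢ C)
    (wH : V × V → ℕ∞) (hwH : ∀ e ∈ EH, wH e = dtil e.1 e.2)
    -- a minimum-weight path `π` in `G` from `x ∈ C` to `v`
    (x : V) (hx : x ∈ C) (v : V)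
    (p : List V) (hp : IsWalk E x v p)
    (hmin : walkWeight (fun e => (wG e : ℕ∞)) p = gdist E (fun e => (wG e : ℕ∞)) x v)
    -- the nodes `y_0 = x, y_1, …, y_k` of `C` on `π`, in order
    (k : ℕ) (y : Fin (k + 1) → V) (idx : Fin (k + 1) → ℕ)
    (hmono : StrictMono idx)
    (hidx : ∀ i, idx i < p.length)
    (hgetY : ∀ i, p[idx i]? = some (y i))
    (hyC : ∀ i, y i ∈ C)
    (hy0 : y 0 = x)
    (hsub : ∀ i : Fin k, idx i.succ - idx i.castSucc ≤ h - 1) :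
    gdist EH wH s (y (Fin.last k)) ≤
      wH (s, y 0) + 2 * gdist E (fun e => (wG e : ℕ∞)) (y 0) (y (Fin.last k)) := by
  -- `f t` is the `t`-th node of the path; the default value `x` is never used below.
  set f : ℕ → V := fun t => p.getD t x with hf
  set d := gdist E (fun e => (wG e : ℕ∞)) with hd
  have hlen : 0 < p.length := List.length_pos_iff.2 hp.1
  have hpf : p = (List.range' 0 (p.length - 1 + 1)).map f := by
    rw [Nat.sub_add_cancel hlen]
    apply List.ext_getElem
    · simp
    · intro n h1 h2
      simp [hf, h1]
  have hf0 : f 0 = x := by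
    have := hp.2.1
    rw [List.head?_eq_getElem?] at this
    simp [hf, this]
  have hfv : f (p.length - 1) = v := by
    have := hp.2.2.1
    rw [List.getLast?_eq_getElem?] at this
    simp [hf, this]
  have hfy : ∀ i, f (idx i) = y i := fun i => by simp [hf, hgetY i]
  have hE : ∀ t, t + 1 < p.length → (f t, f (t + 1)) ∈ E := by
    intro t ht
    have := List.isChain_iff_getElem.1 hp.2.2.2 t ht
    simpa [hf, ht, Nat.lt_of_succ_lt ht] using this
  have hseg := fun i n (hn : i + n < p.length) =>
    isWalk_seg E wG f i n fun t _ ht => hE t (by omega)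
  have hdseg : ∀ i n, i + n < p.length → d (f i) (f (i + n)) ≤ (segWeight wG f i n : ℕ∞) := by
    intro i n hn
    obtain ⟨h1, h2⟩ := hseg i n hn
    exact (gdist_le h1).trans h2.le
  have hle : ∀ i, idx 0 ≤ idx i := fun i => hmono.monotone (Fin.zero_le i)
  have hsub_min : (segWeight wG f (idx 0) (idx (Fin.last k) - idx 0) : ℕ∞) ≤
      d (y 0) (y (Fin.last k)) := by
    have hk := hidx (Fin.last k)
    have h0k := hle (Fin.last k)
    have ha := hdseg 0 (idx 0) (by omega)
    have hb := hdseg (idx (Fin.last k)) (p.length - 1 - idx (Fin.last k)) (by omega)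
    rw [zero_add, hf0, hfy] at ha
    rw [show idx (Fin.last k) + (p.length - 1 - idx (Fin.last k)) = p.length - 1 by omega,
      hfv, hfy] at hb
    have htot : d x v = (segWeight wG f 0 (idx 0) : ℕ∞) +
        segWeight wG f (idx 0) (idx (Fin.last k) - idx 0) +
        segWeight wG f (idx (Fin.last k)) (p.length - 1 - idx (Fin.last k)) := by
      have h1 := (hseg 0 (p.length - 1) (by omega)).2
      rw [← hpf, hmin] at h1
      rw [h1, show p.length - 1 = idx 0 + (idx (Fin.last k) - idx 0) +
        (p.length - 1 - idx (Fin.last k)) by omega, segWeight_add, segWeight_add,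
        show 0 + (idx 0 + (idx (Fin.last k) - idx 0)) = idx (Fin.last k) by omega]
      rw [show idx 0 + (idx (Fin.last k) - idx 0) + (p.length - 1 - idx (Fin.last k)) -
        idx (Fin.last k) = p.length - 1 - idx (Fin.last k) by omega]
      push_cast
      rw [zero_add]
    have htri : d x v ≤ (segWeight wG f 0 (idx 0) : ℕ∞) + d (y 0) (y (Fin.last k)) +
        segWeight wG f (idx (Fin.last k)) (p.length - 1 - idx (Fin.last k)) :=
      calc d x v ≤ d x (y (Fin.last k)) + d (y (Fin.last k)) v := gdist_triangle ..
        _ ≤ d x (y 0) + d (y 0) (y (Fin.last k)) + d (y (Fin.last k)) v := by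
          gcongr
          exact gdist_triangle ..
        _ ≤ _ := by gcongr
    rw [htot] at htri
    -- Both outer segments have finite weight, so they cancel in `ℕ∞`.
    exact (ENat.add_le_add_iff_left (ENat.natCast_ne_top _)).1
      ((ENat.add_le_add_iff_right (ENat.natCast_ne_top _)).1 htri)
  have hedge : ∀ a ∈ C, ∀ b ∈ C, (a, b) ∈ EH := fun a ha b hb => hEH ▸ Set.mk_mem_prod ha hb
  have hmain : ∀ i : Fin (k + 1), gdist EH wH s (y i) ≤
      wH (s, y 0) + 2 * (segWeight wG f (idx 0) (idx i - idx 0) : ℕ∞) := by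
    intro i
    induction i using Fin.induction with
    | zero => simpa [segWeight] using gdist_le_edge (w := wH) (hedge s hsC (y 0) (hyC 0))
    | succ i ih =>
      have hlt : idx i.castSucc < idx i.succ := hmono Fin.castSucc_lt_succ
      have h0 := hle i.castSucc
      have hi := hidx i.succ
      have hs := hsub i
      have hab := hedge _ (hyC i.castSucc) _ (hyC i.succ)
      have hstep : gdist EH wH (y i.castSucc) (y i.succ) ≤
          2 * (segWeight wG f (idx i.castSucc) (idx i.succ - idx i.castSucc) : ℕ∞) := by
        obtain ⟨h1, h2⟩ := hseg (idx i.castSucc) (idx i.succ - idx i.castSucc) (by omega)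
        rw [Nat.add_sub_cancel' hlt.le, hfy, hfy] at h1
        calc gdist EH wH (y i.castSucc) (y i.succ) ≤ wH (y i.castSucc, y i.succ) :=
              gdist_le_edge hab
          _ = dtil (y i.castSucc) (y i.succ) := hwH _ hab
          _ ≤ 2 * hdist E (fun e => (wG e : ℕ∞)) h (y i.castSucc) (y i.succ) :=
              hdtil _ (hyC _) _ (hyC _)
          _ ≤ _ := by
              rw [← h2]
              gcongr
              exact hdist_le h1 (by simp; omega)
      calc gdist EH wH s (y i.succ) ≤
            gdist EH wH s (y i.castSucc) + gdist EH wH (y i.castSucc) (y i.succ) :=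
            gdist_triangle ..
        _ ≤ _ := add_le_add ih hstep
        _ = _ := by
          rw [show idx i.succ - idx 0 = (idx i.castSucc - idx 0) +
            (idx i.succ - idx i.castSucc) by omega, segWeight_add,
            Nat.add_sub_cancel' h0]
          push_cast
          rw [mul_add, add_assoc]
  refine (hmain (Fin.last k)).trans ?_
  gcongr
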